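/- Let L = {0, +, −, <, P} with P a unary relation symbol. (a) Let M₁ be the L-structure whose universe is the real numbers with the standard ordered additive group structure and with P interpreted as {2^k : k ∈ ℤ}. Then Th(M₁) is not strong. (b) Let M₂ be the L-structure whose universe is the integers with the standard ordered additive group structure and with P interpreted as {2^k : k ∈ ℕ}. Then Th(M₂) is not strong. -/

import Mathlib

/- Common model-theoretic definitions. -/

open FirstOrder Set

universe u v w

/-- An inp-pattern of depth `κ` in `nvars` free variables witnessed in the `L`-structure `N`:
formulas `φ α (x̄; ȳ_α)` (with `m α` parameter variables), positive integers `k α`, and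
parameter tuples `b α i` such that each row is `k α`-inconsistent (no tuple of `N` realizes
`φ α (x̄; b α i)` for `k α` distinct values of `i`), while every path is finitely consistent. -/
def IsInpPattern (L : FirstOrder.Language.{u, v}) (N : Type*) [L.Structure N]
    (κ : Type*) (nvars : ℕ) : Prop :=
  ∃ (m : κ → ℕ) (φ : ∀ α : κ, L.Formula (Fin nvars ⊕ Fin (m α)))
    (k : κ → ℕ) (b : ∀ α : κ, ℕ → Fin (m α) → N),
    (∀ α, 1 ≤ k α) ∧
    (∀ α : κ, ¬ ∃ (x : Fin nvars → N) (s : Finset ℕ),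
        k α ≤ s.card ∧ ∀ i ∈ s, (φ α).Realize (Sum.elim x (b α i))) ∧
    (∀ (η : κ → ℕ) (S : Finset κ), ∃ x : Fin nvars → N,
        ∀ α ∈ S, (φ α).Realize (Sum.elim x (b α (η α))))

/-- `Th(M)` has burden at least `n`: some model of `Th(M)` witnesses an inp-pattern of
depth `n` in a single variable. -/
def HasBurdenAtLeast (L : FirstOrder.Language.{u, v}) (M : Type w) [L.Structure M]
    (n : ℕ) : Prop :=
  ∃ N : FirstOrder.Language.Theory.ModelType.{u, v, max u v w} (L.completeTheory M),
    IsInpPattern L N (Fin n) 1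

/-- `Th(M)` has finite burden: for some `n`, no model of `Th(M)` witnesses an inp-pattern of
depth `n + 1` in a single variable. -/
def HasFiniteBurden (L : FirstOrder.Language.{u, v}) (M : Type w) [L.Structure M] : Prop :=
  ∃ n : ℕ, ¬ HasBurdenAtLeast L M (n + 1)

/-- `Th(M)` is strong: no model of `Th(M)` witnesses an inp-pattern of depth `ω` in any
finite tuple of variables. -/
def IsStrong (L : FirstOrder.Language.{u, v}) (M : Type w) [L.Structure M] : Prop :=
  ∀ (N : FirstOrder.Language.Theory.ModelType.{u, v, max u v w} (L.completeTheory M))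
    (nvars : ℕ), ¬ IsInpPattern L N ℕ nvars

/-- A set `D` in a linear order is discrete if each of its points is isolated in it. -/
def DiscreteIn {R : Type*} [LinearOrder R] (D : Set R) : Prop :=
  ∀ x ∈ D, ∃ a b : R, a < x ∧ x < b ∧ Set.Ioo a b ∩ D = {x}

/-- `M` is definably complete: every nonempty definable subset of `R` that is bounded above
has a least upper bound. -/
def DefinablyComplete (L : FirstOrder.Language.{u, v}) (R : Type w)
    [LinearOrder R] [L.Structure R] : Prop :=
  ∀ X : Set R, (Set.univ : Set R).Definable₁ L X → X.Nonempty → BddAbove X →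
    ∃ a : R, IsLUB X a

/-- Function symbols of the language `{0, +, −, <, P}`: a constant `0`, unary `−`,
binary `+`. -/
inductive OagPFunc : ℕ → Type
  | zero : OagPFunc 0
  | neg : OagPFunc 1
  | add : OagPFunc 2

/-- Relation symbols of the language `{0, +, −, <, P}`: binary `<` and unary `P`. -/
inductive OagPRel : ℕ → Type
  | lt : OagPRel 2
  | P : OagPRel 1

/-- The language `{0, +, −, <, P}` with `P` a unary relation symbol. -/
def LoagP : FirstOrder.Language := ⟨OagPFunc, OagPRel⟩

/-- The structure `M₁`: the reals with the standard ordered additive group structure and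
`P` interpreted as `{2 ^ k : k ∈ ℤ}`. -/
instance : LoagP.Structure ℝ where
  funMap {n} f v :=
    match f with
    | .zero => 0
    | .neg => -(v 0)
    | .add => v 0 + v 1
  RelMap {n} r v :=
    match r with
    | .lt => v 0 < v 1
    | .P => ∃ k : ℤ, v 0 = 2 ^ k

/-- The structure `M₂`: the integers with the standard ordered additive group structure and
`P` interpreted as `{2 ^ k : k ∈ ℕ}`. -/
instance : LoagP.Structure ℤ where
  funMap {n} f v :=
    match f with
    | .zero => 0
    | .neg => -(v 0)
    | .add => v 0 + v 1
  RelMap {n} r v :=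
    match r with
    | .lt => v 0 < v 1
    | .P => ∃ k : ℕ, v 0 = 2 ^ k

open FirstOrder.Language Filter in
/-- Transfer of an approximate pattern to an ultrapower. -/
theorem not_strong_of_approx {L : FirstOrder.Language.{0, 0}} {M : Type} [L.Structure M]
    [Nonempty M] (φ : ℕ → L.Formula (Fin 1 ⊕ Fin 1)) (b : ℕ → ℕ → ℕ → M)
    (hrow : ∀ α x y y', (φ α).Realize (Sum.elim x y) → (φ α).Realize (Sum.elim x y') →
      (y 0 : M) = y' 0)
    (hne : ∀ α i j, i ≠ j → ∀ t, b α i t ≠ b α j t)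
    (hpath : ∀ (η : ℕ → ℕ) (N : ℕ), ∃ x : ℕ → M, ∀ α ≤ N, ∀ᶠ t in atTop,
      (φ α).Realize (Sum.elim (fun _ => x t) (fun _ => b α (η α) t))) :
    ¬ IsStrong L M := by
  intro hs
  let u : Ultrafilter ℕ := hyperfilter ℕ
  let N := (u : Filter ℕ).Product (fun _ : ℕ => M)
  let q : (ℕ → M) → N := fun f => (f : (u : Filter ℕ).Product (fun _ : ℕ => M))
  have hq : ∀ y : N, ∃ f, q f = y := fun y => Quotient.exists_rep y
  have : N ⊨ L.completeTheory M := by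
    refine (Theory.model_iff _).2 fun σ hσ => ?_
    refine (Ultraproduct.sentence_realize (M := fun _ : ℕ => M) (u := u) σ).2 ?_
    exact Eventually.of_forall fun _ => hσ
  have : Nonempty N := ⟨q fun _ => Classical.arbitrary M⟩
  have los : ∀ (α : ℕ) (x y : ℕ → M),
      (φ α).Realize (M := N) (Sum.elim (fun _ => q x) (fun _ => q y)) ↔
      ∀ᶠ t in (u : Filter ℕ), (φ α).Realize (Sum.elim (fun _ => x t) (fun _ => y t)) := by
    intro α x y
    have h := Ultraproduct.realize_formula_cast (M := fun _ : ℕ => M) (u := u) (φ := φ α)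
      (x := Sum.elim (fun _ => x) (fun _ => y))
    have e1 : (fun i : Fin 1 ⊕ Fin 1 => q ((Sum.elim (fun _ => x) (fun _ => y) : _ → ℕ → M) i))
        = Sum.elim (fun _ => q x) (fun _ => q y) := by
      funext i; cases i <;> rfl
    have e2 : ∀ t, (fun i : Fin 1 ⊕ Fin 1 => (Sum.elim (fun _ => x) (fun _ => y) : _ → ℕ → M) i t)
        = Sum.elim (fun _ => x t) (fun _ => y t) := by
      intro t; funext i; cases i <;> rfl
    rw [← e1]
    refine h.trans ?_
    simp only [e2]
  refine hs (Theory.ModelType.of _ N) 1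
    ⟨fun _ => 1, φ, fun _ => 2, fun α i _ => q (b α i), fun _ => by norm_num, ?_, ?_⟩
  · rintro α ⟨x, s, hcard, hx⟩
    obtain ⟨i, hi, j, hj, hij⟩ := Finset.one_lt_card.1 hcard
    obtain ⟨f, hf⟩ := hq (x 0)
    have hxf : x = fun _ => q f := by
      funext k; rw [hf, Subsingleton.elim k 0]
    have h1 := hx i hi
    have h2 := hx j hj
    rw [hxf] at h1 h2
    obtain ⟨t, ht1, ht2⟩ := (((los α f (b α i)).1 h1).and ((los α f (b α j)).1 h2)).exists
    exact hne α i j hij t (hrow α _ _ _ ht1 ht2)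
  · intro η S
    obtain ⟨x, hx⟩ := hpath η (S.sup id)
    refine ⟨fun _ => q x, fun α hα => (los α x (b α (η α))).2 ?_⟩
    have hle : (u : Filter ℕ) ≤ atTop := by
      rw [← Nat.cofinite_eq_atTop]; exact hyperfilter_le_cofinite
    exact hle (hx α (Finset.le_sup (f := id) hα))

/-- `z` is the leading binary digit of `x`. -/
def LeadD {M : Type} [AddCommGroup M] [LinearOrder M] (P : M → Prop) (x z : M) : Prop :=
  P z ∧ z ≤ x ∧ x < z + z

/-- `y` is the `n`-th leading binary digit of `x`. -/
def LeadR {M : Type} [AddCommGroup M] [LinearOrder M] (P : M → Prop) : ℕ → M → M → Prop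
  | 0, x, y => LeadD P x y
  | n + 1, x, y => ∃ z w, LeadD P x z ∧ w + z = x ∧ LeadR P n w y

/-- Sum of two terms. -/
def tAdd {α : Type} (s t : LoagP.Term α) : LoagP.Term α :=
  FirstOrder.Language.Functions.apply₂ (L := LoagP) OagPFunc.add s t

/-- The formula expressing `LeadD` between two variables. -/
def fLead {α : Type} (x z : α) : LoagP.Formula α :=
  (FirstOrder.Language.Relations.formula₁ (L := LoagP) OagPRel.P (.var z)) ⊓
  (FirstOrder.Language.Formula.not (FirstOrder.Language.Relations.formula₂ (L := LoagP) OagPRel.lt (.var x) (.var z)) ⊓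
  (FirstOrder.Language.Relations.formula₂ (L := LoagP) OagPRel.lt (.var x)
    (tAdd (.var z) (.var z))))

/-- The formula expressing `LeadR`. -/
noncomputable def fR : ℕ → LoagP.Formula (Fin 1 ⊕ Fin 1)
  | 0 => fLead (Sum.inl 0) (Sum.inr 0)
  | n + 1 => FirstOrder.Language.Formula.iExs (Fin 2)
      (fLead (Sum.inl (Sum.inl 0)) (Sum.inr 0) ⊓
        ((FirstOrder.Language.Term.equal (tAdd (.var (Sum.inr 1)) (.var (Sum.inr 0)))
          (.var (Sum.inl (Sum.inl 0)))) ⊓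
        (fR n).relabel (Sum.elim (fun _ => Sum.inr 1) (fun _ => Sum.inl (Sum.inr 0)))))

open FirstOrder.Language in
theorem not_strong_of_powers {M : Type} [AddCommGroup M] [LinearOrder M] [IsOrderedAddMonoid M]
    [LoagP.Structure M] (P : M → Prop)
    (hadd : ∀ v : Fin 2 → M, Structure.funMap (L := LoagP) OagPFunc.add v = v 0 + v 1)
    (hlt : ∀ v : Fin 2 → M, Structure.RelMap (L := LoagP) OagPRel.lt v ↔ v 0 < v 1)
    (hP : ∀ v : Fin 1 → M, Structure.RelMap (L := LoagP) OagPRel.P v ↔ P (v 0))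
    (hgap : ∀ z z', P z → P z' → z < z' → z + z ≤ z')
    (p : ℕ → M) (hpP : ∀ n, P (p n)) (hp0 : ∀ n, 0 < p n)
    (hp : ∀ n, p (n + 1) = p n + p n) : ¬ IsStrong LoagP M := by
  have hD : ∀ {α : Type} (x z : α) (v : α → M),
      (fLead x z).Realize v ↔ LeadD P (v x) (v z) := by
    intro α x z v
    have a0 : (tAdd (.var z) (.var z) : LoagP.Term α).realize v = v z + v z := by
      simp [tAdd, Functions.apply₂, Term.realize, hadd]
    have a1 := (Formula.realize_rel₁ (L := LoagP) (M := M) (R := OagPRel.P)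
      (t := (.var z : LoagP.Term α)) (v := v)).trans (hP _)
    have a2 := (Formula.realize_rel₂ (L := LoagP) (M := M) (R := OagPRel.lt)
      (t₁ := (.var x : LoagP.Term α)) (t₂ := .var z) (v := v)).trans (hlt _)
    have a3 := (Formula.realize_rel₂ (L := LoagP) (M := M) (R := OagPRel.lt)
      (t₁ := (.var x : LoagP.Term α)) (t₂ := tAdd (.var z) (.var z)) (v := v)).trans (hlt _)
    rw [fLead, Formula.realize_inf, Formula.realize_inf, Formula.realize_not, a1, a2, a3]
    simp [LeadD, a0]
  have hR : ∀ n (v : Fin 1 ⊕ Fin 1 → M),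
      (fR n).Realize v ↔ LeadR P n (v (Sum.inl 0)) (v (Sum.inr 0)) := by
    intro n
    induction n with
    | zero => intro v; exact hD _ _ v
    | succ n ih =>
      intro v
      simp only [fR, LeadR, Formula.realize_iExs, Formula.realize_inf, hD, Formula.realize_relabel,
        ih, Formula.realize_equal]
      constructor
      · rintro ⟨i, h1, h2, h3⟩
        refine ⟨i 0, i 1, h1, ?_, h3⟩
        simpa [tAdd, Functions.apply₂, Term.realize, hadd] using h2
      · rintro ⟨z, w, h1, h2, h3⟩
        refine ⟨![z, w], h1, ?_, h3⟩
        simpa [tAdd, Functions.apply₂, Term.realize, hadd] using h2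
  have hDu : ∀ x z z', LeadD P x z → LeadD P x z' → z = z' := by
    rintro x z z' ⟨h1, h2, h3⟩ ⟨h1', h2', h3'⟩
    rcases lt_trichotomy z z' with h | h | h
    · exact absurd (h3.trans_le (hgap _ _ h1 h1' h)) (not_lt.2 h2')
    · exact h
    · exact absurd (h3'.trans_le (hgap _ _ h1' h1 h)) (not_lt.2 h2)
  have hRu : ∀ n x y y', LeadR P n x y → LeadR P n x y' → y = y' := by
    intro n
    induction n with
    | zero => exact hDu
    | succ n ih =>
      rintro x y y' ⟨z, w, h1, h2, h3⟩ ⟨z', w', h1', h2', h3'⟩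
      obtain rfl := hDu _ _ _ h1 h1'
      obtain rfl : w = w' := add_right_cancel (h2.trans h2'.symm)
      exact ih _ _ _ h3 h3'
  have hmono : StrictMono p := strictMono_nat_of_lt_succ fun n => by
    rw [hp]; exact lt_add_of_pos_left _ (hp0 n)
  let X : (ℕ → ℕ) → ℕ → ℕ → M := fun e m => m.rec (fun _ => 0) (fun _ f a => p (e a) + f (a + 1))
  have hX0 : ∀ e a, X e 0 a = 0 := fun _ _ => rfl
  have hXs : ∀ e m a, X e (m + 1) a = p (e a) + X e m (a + 1) := fun _ _ _ => rfl
  have hXb : ∀ (e : ℕ → ℕ) (N : ℕ), (∀ a < N, e (a + 1) < e a) → ∀ m a, a + m ≤ N + 1 →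
      0 ≤ X e m a ∧ X e m a < p (e a) + p (e a) := by
    intro e N he m
    induction m with
    | zero => intro a _; rw [hX0]; exact ⟨le_rfl, add_pos (hp0 _) (hp0 _)⟩
    | succ m ih =>
      intro a ha
      rw [hXs]
      obtain ⟨h1, h2⟩ := ih (a + 1) (by omega)
      refine ⟨add_nonneg (hp0 _).le h1, add_lt_add_right ?_ _⟩
      rcases Nat.eq_zero_or_pos m with rfl | hm
      · rw [hX0]; exact hp0 _
      · rw [← hp] at h2
        exact h2.trans_le (hmono.monotone (he a (by omega)))
  have hXR : ∀ (e : ℕ → ℕ) (N : ℕ), (∀ a < N, e (a + 1) < e a) → ∀ α m a, a + m ≤ N + 1 → α < m →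
      LeadR P α (X e m a) (p (e (a + α))) := by
    intro e N he α
    have key : ∀ m a, a + (m + 1) ≤ N + 1 → LeadD P (X e (m + 1) a) (p (e a)) := by
      intro m a ha
      refine ⟨hpP _, ?_, (hXb e N he _ a ha).2⟩
      rw [hXs]
      exact le_add_of_nonneg_right (hXb e N he m (a + 1) (by omega)).1
    induction α with
    | zero =>
      rintro (_ | m) a ha hm
      · omega
      · exact key m a ha
    | succ α ih =>
      rintro (_ | m) a ha hm
      · omega
      · refine ⟨p (e a), X e m (a + 1), key m a ha, ?_, ?_⟩
        · rw [hXs, add_comm]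
        · have := ih m (a + 1) (by omega) (by omega)
          rwa [show a + 1 + α = a + (α + 1) by omega] at this
  refine not_strong_of_approx fR (fun α i t => p ((t - α) * t + i)) ?_ ?_ ?_
  · intro α x y y' h h'
    exact hRu α _ _ _ ((hR _ _).1 h) ((hR _ _).1 h')
  · intro α i j hij t h
    have := hmono.injective h
    omega
  · intro η N
    refine ⟨fun t => X (fun α => (t - α) * t + η α) (N + 1) 0, fun α hα => ?_⟩
    filter_upwards [Filter.eventually_gt_atTop (N + (Finset.range (N + 1)).sup η)] with t ht
    rw [hR]
    have := hXR (fun α => (t - α) * t + η α) N (fun a ha => ?_) α (N + 1) 0 (by omega) (by omega)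
    · simpa using this
    · have h1 : η (a + 1) ≤ (Finset.range (N + 1)).sup η :=
        Finset.le_sup (Finset.mem_range.2 (by omega))
      obtain ⟨s, hs⟩ : ∃ s, t - a = s + 1 := ⟨t - a - 1, by omega⟩
      have hs' : t - (a + 1) = s := by omega
      simp only [hs, hs', Nat.add_mul]
      omega

/-- (a) The theory of `⟨ℝ; 0, +, −, <, {2^k : k ∈ ℤ}⟩` is not strong.
(b) The theory of `⟨ℤ; 0, +, −, <, {2^k : k ∈ ℕ}⟩` is not strong. -/
theorem statement_11 : ¬ IsStrong LoagP ℝ ∧ ¬ IsStrong LoagP ℤ := by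
  constructor
  · refine not_strong_of_powers (fun z : ℝ => ∃ k : ℤ, z = 2 ^ k) (fun _ => rfl) (fun _ => Iff.rfl)
      (fun _ => Iff.rfl) ?_ (fun n => 2 ^ n) (fun n => ⟨n, by simp⟩) (fun n => by positivity)
      (fun n => by ring)
    rintro _ _ ⟨k, rfl⟩ ⟨l, rfl⟩ h
    have h' : k + 1 ≤ l := (zpow_lt_zpow_iff_right₀ (by norm_num : (1 : ℝ) < 2)).1 h
    calc (2 : ℝ) ^ k + 2 ^ k = 2 ^ (k + 1) := by rw [zpow_add₀ (by norm_num)]; ring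
      _ ≤ 2 ^ l := zpow_le_zpow_right₀ (by norm_num) h'
  · refine not_strong_of_powers (fun z : ℤ => ∃ k : ℕ, z = 2 ^ k) (fun _ => rfl) (fun _ => Iff.rfl)
      (fun _ => Iff.rfl) ?_ (fun n => 2 ^ n) (fun n => ⟨n, rfl⟩) (fun n => by positivity)
      (fun n => by ring)
    rintro _ _ ⟨k, rfl⟩ ⟨l, rfl⟩ h
    have h' : k + 1 ≤ l := (pow_lt_pow_iff_right₀ (by norm_num : (1 : ℤ) < 2)).1 h
    calc (2 : ℤ) ^ k + 2 ^ k = 2 ^ (k + 1) := by ring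
      _ ≤ 2 ^ l := pow_le_pow_right₀ (by norm_num) h'
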